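/- Generalised codeword equation with a Pauli error, in extended form: let N ≥ 1, Q_I, Q_M ⊆ {1,…,N}, K_I ⊆ Q_I, K_M ⊆ Q_M. Let U ∈ M_{2ᴺ}(ℂ) be unitary, S_in, S_out ∈ P_N, and ν ∈ {1,−1} satisfy U·(S_in·∏_{q∈K_I} Z_q)·U† = ν·S_out·∏_{q∈K_M} Z_q, and suppose S_out Z_q = Z_q S_out for every q ∈ Q_M. Let F ∈ P_N and s ∈ {0,1} satisfy F·(S_out·∏_{q∈K_M} Z_q) = (−1)^s (S_out·∏_{q∈K_M} Z_q)·F. Let ρ₀ ∈ M_{2ᴺ}(ℂ) satisfy Z_q ρ₀ = ρ₀ for every q ∈ Q_I, and for μ : Q_M → {1,−1} set E_μ = ∏_{q∈Q_M} (I + μ(q) Z_q)/2. Then Tr(S_in ρ₀) = (−1)^s · ν · Σ_{μ : Q_M→{1,−1}} (∏_{q∈K_M} μ(q)) · Tr(S_out E_μ F U ρ₀ U† F E_μ). -/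

import Mathlib

/-!
Everything built from the `Z_q` is diagonal in the computational basis. Hence the `E_μ` are
idempotent, and `∑_μ (∏_{q∈K_M} μ(q)) E_μ = ∏_{q∈K_M} Z_q` is the spectral decomposition of the
right-hand side (`sum_smul_Eproj`): entrywise, the sum over `μ` factors into a product over `q`.

As `S_out` commutes with each `E_μ`, cyclicity of the trace removes the second `E_μ`, so the sum
over `μ` equals `Tr(S_out ∏_{K_M} Z_q · F U ρ₀ U† F)`. Moving `F` around the trace and past
`S_out ∏_{K_M} Z_q` produces `(-1)^s`, with `F² = 1` (`PauliSet_mul_self`); conjugating back by `U`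
produces `ν` and leaves `Tr(S_in ∏_{K_I} Z_q ρ₀)`, where the `Z_q` are absorbed by `ρ₀`.
-/

open Matrix
open scoped Matrix

noncomputable section

/-- The Pauli matrix `X`. -/
def PX : Matrix (Fin 2) (Fin 2) ℂ := !![0, 1; 1, 0]

/-- The Pauli matrix `Z`. -/
def PZ : Matrix (Fin 2) (Fin 2) ℂ := !![1, 0; 0, -1]

/-- The Pauli matrix `Y = i X Z`. -/
def PY : Matrix (Fin 2) (Fin 2) ℂ := Complex.I • (PX * PZ)

/-- The single-qubit matrix `X^x Z^z`, exponents via the lift `𝔽₂ → {0,1} ⊆ ℕ`. -/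
def XZ (x z : ZMod 2) : Matrix (Fin 2) (Fin 2) ℂ := PX ^ x.val * PZ ^ z.val

/-- The `n`-fold Kronecker (tensor) product of 2×2 matrices, realised on the
index type `Fin n → Fin 2` (so that the `(i,j)` entry is the product of the
single-site entries). -/
def tensorFun {n : ℕ} (f : Fin n → Matrix (Fin 2) (Fin 2) ℂ) :
    Matrix (Fin n → Fin 2) (Fin n → Fin 2) ℂ :=
  Matrix.of fun i j => ∏ q, f q (i q) (j q)

/-- Hamming weight of a vector over `𝔽₂`. -/
def hamWt {n : ℕ} (v : Fin n → ZMod 2) : ℕ :=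
  (Finset.univ.filter fun q => v q ≠ 0).card

/-- The map `σ(x,z) = i^{|x⊙z|} (X^{x₁}Z^{z₁}) ⊗ ⋯ ⊗ (X^{x_n}Z^{z_n})`. -/
def pauliSigma {n : ℕ} (b : (Fin n → ZMod 2) × (Fin n → ZMod 2)) :
    Matrix (Fin n → Fin 2) (Fin n → Fin 2) ℂ :=
  Complex.I ^ hamWt (fun q => b.1 q * b.2 q) • tensorFun fun q => XZ (b.1 q) (b.2 q)

/-- `P_n`: the set of `n`-fold Kronecker products of matrices from `{I₂, X, Y, Z}`. -/
def PauliSet (n : ℕ) : Set (Matrix (Fin n → Fin 2) (Fin n → Fin 2) ℂ) :=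
  { M | ∃ f : Fin n → Matrix (Fin 2) (Fin 2) ℂ,
      (∀ q, f q = 1 ∨ f q = PX ∨ f q = PY ∨ f q = PZ) ∧ M = tensorFun f }

/-- `Z_q = I₂^{⊗(q−1)} ⊗ Z ⊗ I₂^{⊗(N−q)}`, realised on the index type
`Fin N → Fin 2`. -/
def Zq (N : ℕ) (q : Fin N) : Matrix (Fin N → Fin 2) (Fin N → Fin 2) ℂ :=
  tensorFun fun p => if p = q then PZ else 1

/-- A Boolean encoding of a sign in `{1, −1}`. -/
def sgn (b : Bool) : ℂ := if b then 1 else -1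

/-- The measurement projector `E_μ = ∏_{q∈Q} (I + μ(q) Z_q)/2` for a
measurement-outcome assignment `μ : Q → {1,−1}` (encoded by a Boolean
function on `Q`).  Since the factors commute, the product is taken in the
canonical order provided by `Finset.toList`. -/
noncomputable def Eproj (N : ℕ) (Q : Finset (Fin N)) (μ : {q // q ∈ Q} → Bool) :
    Matrix (Fin N → Fin 2) (Fin N → Fin 2) ℂ :=
  (Q.attach.toList.map fun q => (2⁻¹ : ℂ) • (1 + sgn (μ q) • Zq N q.1)).prod

/-- The product `∏_{q∈K} Z_q` of the commuting matrices `Z_q`, `q ∈ K`, taken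
in the canonical order provided by `Finset.toList`. -/
noncomputable def ZProd (N : ℕ) (K : Finset (Fin N)) :
    Matrix (Fin N → Fin 2) (Fin N → Fin 2) ℂ :=
  (K.toList.map (Zq N)).prod

/-- The diagonal entry `±1` of `Z_q` at the basis index `i`. -/
def zval {N : ℕ} (q : Fin N) (i : Fin N → Fin 2) : ℂ := PZ (i q) (i q)

theorem zval_cases {N : ℕ} (q : Fin N) (i : Fin N → Fin 2) : zval q i = 1 ∨ zval q i = -1 := by
  unfold zval PZ
  generalize i q = a
  fin_cases a <;> simp

theorem tensorFun_mul {n : ℕ} (f g : Fin n → Matrix (Fin 2) (Fin 2) ℂ) :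
    tensorFun f * tensorFun g = tensorFun fun q => f q * g q := by
  ext i j
  simp only [tensorFun, Matrix.mul_apply, Matrix.of_apply, Finset.prod_univ_sum,
    Fintype.piFinset_univ, Finset.prod_mul_distrib]

theorem tensorFun_diagonal {n : ℕ} (d : Fin n → Fin 2 → ℂ) :
    tensorFun (fun q => Matrix.diagonal (d q))
      = Matrix.diagonal fun i => ∏ q, d q (i q) := by
  ext i j
  simp only [tensorFun, Matrix.of_apply, Matrix.diagonal_apply]
  split_ifs with h
  · subst h; simp
  · obtain ⟨q, hq⟩ := Function.ne_iff.mp h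
    exact Finset.prod_eq_zero (Finset.mem_univ q) (if_neg hq)

theorem tensorFun_one {n : ℕ} :
    tensorFun (fun _ : Fin n => (1 : Matrix (Fin 2) (Fin 2) ℂ)) = 1 := by
  have h := tensorFun_diagonal (n := n) fun _ _ => 1
  simpa using h

theorem PauliSet_mul_self {n : ℕ} {M : Matrix (Fin n → Fin 2) (Fin n → Fin 2) ℂ}
    (hM : M ∈ PauliSet n) : M * M = 1 := by
  obtain ⟨f, hf, rfl⟩ := hM
  rw [tensorFun_mul, ← tensorFun_one]
  congr 1
  funext q
  rcases hf q with h | h | h | h <;> rw [h]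
  · simp
  · ext a b; fin_cases a <;> fin_cases b <;> simp [PX, Matrix.mul_apply]
  · ext a b; fin_cases a <;> fin_cases b <;> simp [PY, PX, PZ, Matrix.mul_apply]
  · ext a b; fin_cases a <;> fin_cases b <;> simp [PZ, Matrix.mul_apply]

theorem Zq_eq_diagonal (N : ℕ) (q : Fin N) : Zq N q = Matrix.diagonal (zval q) := by
  have h := tensorFun_diagonal (n := N) fun p a => if p = q then PZ a a else 1
  have hf : (fun p : Fin N => if p = q then PZ else 1)
      = fun p => Matrix.diagonal fun a => if p = q then PZ a a else 1 := by
    funext p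
    split_ifs
    · ext a b; fin_cases a <;> fin_cases b <;> simp [PZ]
    · simp
  rw [Zq, hf, h]
  congr 1
  funext i
  simp [zval]

theorem list_prod_diagonal {m α : Type*} [Fintype m] [DecidableEq m] (l : List α)
    (d : α → m → ℂ) :
    (l.map fun a => Matrix.diagonal (d a)).prod = Matrix.diagonal (l.map d).prod := by
  induction l with
  | nil => exact Matrix.diagonal_one.symm
  | cons a l ih =>
    simp only [List.map_cons, List.prod_cons, ih, Matrix.diagonal_mul_diagonal]
    rfl

theorem ZProd_eq_diagonal (N : ℕ) (K : Finset (Fin N)) :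
    ZProd N K = Matrix.diagonal fun i => ∏ q ∈ K, zval q i := by
  have h : Zq N = fun q => Matrix.diagonal (zval q) := funext (Zq_eq_diagonal N)
  rw [ZProd, h, list_prod_diagonal, Finset.prod_map_toList]
  congr 1
  funext i
  simp

theorem Eproj_eq_diagonal (N : ℕ) (Q : Finset (Fin N)) (μ : {q // q ∈ Q} → Bool) :
    Eproj N Q μ
      = Matrix.diagonal fun i => ∏ q ∈ Q.attach, 2⁻¹ * (1 + sgn (μ q) * zval q.1 i) := by
  have h : (fun q : {q // q ∈ Q} => (2⁻¹ : ℂ) • (1 + sgn (μ q) • Zq N q.1))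
      = fun q => Matrix.diagonal fun i => 2⁻¹ * (1 + sgn (μ q) * zval q.1 i) := by
    funext q
    ext i j
    by_cases hij : i = j <;> simp [Zq_eq_diagonal, hij]
  rw [Eproj, h, list_prod_diagonal, Finset.prod_map_toList]
  congr 1
  funext i
  simp

theorem Eproj_mul_self (N : ℕ) (Q : Finset (Fin N)) (μ : {q // q ∈ Q} → Bool) :
    Eproj N Q μ * Eproj N Q μ = Eproj N Q μ := by
  rw [Eproj_eq_diagonal, Matrix.diagonal_mul_diagonal]
  congr 1
  funext i
  rw [← Finset.prod_mul_distrib]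
  refine Finset.prod_congr rfl fun q _ => ?_
  rcases zval_cases q.1 i with h | h <;> cases μ q <;> norm_num [h, sgn]

theorem commute_Eproj {N : ℕ} {Q : Finset (Fin N)}
    {S : Matrix (Fin N → Fin 2) (Fin N → Fin 2) ℂ}
    (hS : ∀ q ∈ Q, S * Zq N q = Zq N q * S) (μ : {q // q ∈ Q} → Bool) :
    Commute S (Eproj N Q μ) := by
  refine Commute.list_prod_right _ _ fun x hx => ?_
  obtain ⟨q, -, rfl⟩ := List.mem_map.mp hx
  have hq : Commute S (Zq N q.1) := hS q.1 q.2
  exact ((Commute.one_right S).add_right (hq.smul_right _)).smul_right _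

/-- The joint spectral decomposition of `∏_{q∈K} Z_q` over the outcomes on `Q ⊇ K`. -/
theorem sum_smul_Eproj {N : ℕ} {K Q : Finset (Fin N)} (hK : K ⊆ Q) :
    ∑ μ : {q // q ∈ Q} → Bool,
        (∏ q ∈ Q.attach, if (q : Fin N) ∈ K then sgn (μ q) else 1) • Eproj N Q μ
      = ZProd N K := by
  rw [ZProd_eq_diagonal]
  ext i j
  simp only [Eproj_eq_diagonal, Matrix.sum_apply, Matrix.smul_apply, Matrix.diagonal_apply]
  split_ifs with hij
  swap
  · simp
  simp only [smul_eq_mul, ← Finset.prod_mul_distrib]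
  -- the sum over all sign assignments of a product over sites factors into single-site sums
  have hfac := Finset.prod_univ_sum (fun _ : {q // q ∈ Q} => (Finset.univ : Finset Bool))
    fun q b => (if (q : Fin N) ∈ K then sgn b else 1) * (2⁻¹ * (1 + sgn b * zval q.1 i))
  rw [Fintype.piFinset_univ] at hfac
  rw [← Finset.univ_eq_attach, ← hfac]
  have hsite : ∀ q : {q // q ∈ Q}, (∑ b : Bool,
      (if (q : Fin N) ∈ K then sgn b else 1) * (2⁻¹ * (1 + sgn b * zval q.1 i)))
        = if (q : Fin N) ∈ K then zval q.1 i else 1 := by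
    intro q
    rw [Fintype.sum_bool]
    split_ifs <;> simp only [sgn, if_true, Bool.false_eq_true, if_false] <;> ring
  simp only [hsite]
  rw [Finset.univ_eq_attach, Finset.prod_attach Q fun q => if q ∈ K then zval q i else 1,
    Finset.prod_ite_mem, Finset.inter_eq_right.mpr hK]

theorem ZProd_mul_eq {N : ℕ} {K Q : Finset (Fin N)} (hK : K ⊆ Q)
    {ρ : Matrix (Fin N → Fin 2) (Fin N → Fin 2) ℂ} (hρ : ∀ q ∈ Q, Zq N q * ρ = ρ) :
    ZProd N K * ρ = ρ := by
  have key : ∀ l : List (Fin N), (∀ q ∈ l, q ∈ Q) → (l.map (Zq N)).prod * ρ = ρ := by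
    intro l
    induction l with
    | nil => simp
    | cons a l ih =>
      intro h
      rw [List.map_cons, List.prod_cons, Matrix.mul_assoc,
        ih fun q hq => h q (List.mem_cons_of_mem _ hq), hρ a (h a List.mem_cons_self)]
  exact key _ fun q hq => hK (Finset.mem_toList.mp hq)

/-- generalised codeword equation with a Pauli error `F`:
`Tr(S_in ρ₀) = (−1)^s ν · Σ_μ (∏_{q∈K_M} μ(q)) · Tr(S_out E_μ F U ρ₀ U† F E_μ)`. -/
theorem generalised_codeword_equation (N : ℕ) (hN : 1 ≤ N)
    (QI QM KI KM : Finset (Fin N)) (hKI : KI ⊆ QI) (hKM : KM ⊆ QM)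
    (U : Matrix (Fin N → Fin 2) (Fin N → Fin 2) ℂ)
    (hU : U ∈ Matrix.unitaryGroup (Fin N → Fin 2) ℂ)
    (Sin Sout : Matrix (Fin N → Fin 2) (Fin N → Fin 2) ℂ)
    (hSin : Sin ∈ PauliSet N) (hSout : Sout ∈ PauliSet N)
    (ν : ℂ) (hν : ν = 1 ∨ ν = -1)
    (hconj : U * (Sin * ZProd N KI) * Uᴴ = ν • (Sout * ZProd N KM))
    (hcomm : ∀ q ∈ QM, Sout * Zq N q = Zq N q * Sout)
    (F : Matrix (Fin N → Fin 2) (Fin N → Fin 2) ℂ) (hF : F ∈ PauliSet N)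
    (s : ℕ) (hs : s = 0 ∨ s = 1)
    (hFs : F * (Sout * ZProd N KM) = ((-1 : ℂ) ^ s) • ((Sout * ZProd N KM) * F))
    (ρ₀ : Matrix (Fin N → Fin 2) (Fin N → Fin 2) ℂ)
    (hρ₀ : ∀ q ∈ QI, Zq N q * ρ₀ = ρ₀) :
    (Sin * ρ₀).trace
      = ((-1 : ℂ) ^ s) * ν * ∑ μ : {q // q ∈ QM} → Bool,
          (∏ q ∈ QM.attach, if (q : Fin N) ∈ KM then sgn (μ q) else 1) *
            (Sout * Eproj N QM μ * (F * (U * ρ₀ * Uᴴ) * F) * Eproj N QM μ).trace := by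
  set A := Sout * ZProd N KM with hA
  set σ := U * ρ₀ * Uᴴ with hσ
  have hFF : F * F = 1 := PauliSet_mul_self hF
  have hUU : Uᴴ * U = 1 := Matrix.mem_unitaryGroup_iff'.mp hU
  have hterm : ∀ μ : {q // q ∈ QM} → Bool,
      (Sout * Eproj N QM μ * (F * σ * F) * Eproj N QM μ).trace
        = (Sout * Eproj N QM μ * (F * σ * F)).trace := by
    intro μ
    have hE : Eproj N QM μ * (Sout * Eproj N QM μ) = Sout * Eproj N QM μ := by
      rw [← Matrix.mul_assoc, ← (commute_Eproj hcomm μ).eq, Matrix.mul_assoc, Eproj_mul_self]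
    rw [Matrix.trace_mul_comm, ← Matrix.mul_assoc (Eproj N QM μ), hE]
  have hsum : ∑ μ : {q // q ∈ QM} → Bool,
      (∏ q ∈ QM.attach, if (q : Fin N) ∈ KM then sgn (μ q) else 1) *
        (Sout * Eproj N QM μ * (F * σ * F) * Eproj N QM μ).trace
      = (A * (F * σ * F)).trace := by
    rw [hA, ← sum_smul_Eproj hKM, Matrix.mul_sum, Matrix.sum_mul, Matrix.trace_sum]
    refine Finset.sum_congr rfl fun μ _ => ?_
    rw [hterm, Matrix.mul_smul, Matrix.smul_mul, Matrix.trace_smul, smul_eq_mul]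
  have hflip : (A * (F * σ * F)).trace = (-1 : ℂ) ^ s * (A * σ).trace := by
    have h1 : (A * (F * σ * F)).trace = (F * A * F * σ).trace := by
      rw [← Matrix.mul_assoc, Matrix.trace_mul_comm]
      simp only [Matrix.mul_assoc]
    rw [h1, hFs, Matrix.smul_mul, Matrix.smul_mul, Matrix.mul_assoc A, hFF, Matrix.mul_one,
      Matrix.trace_smul, smul_eq_mul]
  have hback : ν * (A * σ).trace = (Sin * ρ₀).trace := by
    rw [← smul_eq_mul, ← Matrix.trace_smul, ← Matrix.smul_mul, ← hconj, hσ]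
    have h2 : U * (Sin * ZProd N KI) * Uᴴ * (U * ρ₀ * Uᴴ)
        = U * (Sin * (ZProd N KI * ρ₀)) * Uᴴ := by
      calc _ = U * (Sin * ZProd N KI) * (Uᴴ * U) * ρ₀ * Uᴴ := by simp only [Matrix.mul_assoc]
        _ = _ := by rw [hUU]; simp only [Matrix.mul_assoc, Matrix.one_mul]
    rw [h2, ZProd_mul_eq hKI hρ₀, Matrix.trace_mul_comm, ← Matrix.mul_assoc, hUU, Matrix.one_mul]
  have hsign : (-1 : ℂ) ^ s * (-1 : ℂ) ^ s = 1 := by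
    rw [← mul_pow]; norm_num
  rw [hsum, hflip, ← hback]
  linear_combination (-(ν * (A * σ).trace)) * hsign

end
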